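/- arXiv:2306.10333 — 3 statements merged into one kernel-verified Lean document; each statement's English description precedes it below -/
import Mathlib

section
/- Let C be a closed cone with nonempty interior in a real Banach space and let f : int C → int C be order-preserving and subhomogeneous. If x, y ∈ int C satisfy f(x) ≥ αx and f(y) ≤ βy with α > β > 0, then y − x ∈ int C. -/
/-!
Let `s` be the largest real number with `s • x ≤ y`; it exists and is positive because `x` and `y`
are interior points, and the set of such numbers is closed. If `s ≤ 1`, then `x ≤ s⁻¹ • y` and
`α • x ≤ f x ≤ f (s⁻¹ • y) ≤ s⁻¹ • f y ≤ (s⁻¹ * β) • y`, so `(s * (α / β)) • x ≤ y`, which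
contradicts the maximality of `s` since `α / β > 1`. Hence `s > 1`, and
`y - x = (y - s • x) + (s - 1) • x` lies in `C + int C ⊆ int C`.
-/

open Filter Topology Bornology

section ConeDefs

variable {X : Type*} [NormedAddCommGroup X] [NormedSpace ℝ X]

/-- `C` is a closed cone: a closed convex set with `l • C ⊆ C` for `l ≥ 0` and `C ∩ (-C) = {0}`. -/
def IsClosedCone (C : Set X) : Prop :=
  IsClosed C ∧ Convex ℝ C ∧ (∀ l : ℝ, 0 ≤ l → ∀ x ∈ C, l • x ∈ C) ∧ C ∩ (-C) = {0}

/-- `C` is a normal cone: `0 ≤ x ≤ y` implies `‖x‖ ≤ κ * ‖y‖`. -/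
def IsNormalCone (C : Set X) : Prop :=
  ∃ κ : ℝ, ∀ x y : X, x ∈ C → y - x ∈ C → ‖x‖ ≤ κ * ‖y‖

/-- `C` is a regular cone: every decreasing sequence in `C` converges in norm. -/
def IsRegularCone (C : Set X) : Prop :=
  ∀ x : ℕ → X, (∀ n, x n ∈ C) → (∀ n, x n - x (n + 1) ∈ C) →
    ∃ l : X, Tendsto x atTop (𝓝 l)

/-- Thompson's metric: `d_T(x,y) = log inf {β ≥ 1 : β⁻¹ • x ≤ y ∧ y ≤ β • x}`,
where `≤` is the order induced by the cone `C`. -/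
noncomputable def thompsonDist (C : Set X) (x y : X) : ℝ :=
  Real.log (sInf {β : ℝ | 1 ≤ β ∧ y - β⁻¹ • x ∈ C ∧ β • x - y ∈ C})

/-- `A` is bounded in Thompson's metric. -/
def TBounded (C A : Set X) : Prop :=
  ∃ d : ℝ, ∀ x ∈ A, ∀ y ∈ A, thompsonDist C x y ≤ d

/-- Kuratowski's measure of noncompactness for the norm:
the infimum of all `d > 0` such that `A` admits a finite cover by sets of diameter at most `d`. -/
noncomputable def kuratowski (A : Set X) : ℝ :=
  sInf {d : ℝ | 0 < d ∧ ∃ (n : ℕ) (S : Fin n → Set X), A ⊆ ⋃ i, S i ∧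
    ∀ i, IsBounded (S i) ∧ Metric.diam (S i) ≤ d}

/-- Kuratowski's measure of noncompactness for Thompson's metric: the infimum of all `d > 0`
such that `A` admits a finite cover by subsets of `interior C` of `d_T`-diameter at most `d`. -/
noncomputable def tauMNC (C A : Set X) : ℝ :=
  sInf {d : ℝ | 0 < d ∧ ∃ (n : ℕ) (S : Fin n → Set X), A ⊆ ⋃ i, S i ∧
    ∀ i, S i ⊆ interior C ∧ ∀ x ∈ S i, ∀ y ∈ S i, thompsonDist C x y ≤ d}

/-- `f` is continuous and `γ`-condensing on `D`. -/
def GammaCondensing {X : Type*} [NormedAddCommGroup X] [NormedSpace ℝ X]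
    (f : X → X) (D : Set X) : Prop :=
  ContinuousOn f D ∧ ∀ A ⊆ D, IsBounded A → 0 < kuratowski A →
    kuratowski (f '' A) < kuratowski A

/-- `f` is continuous and `τ`-condensing on `D`. -/
def TauCondensing (C : Set X) (f : X → X) (D : Set X) : Prop :=
  ContinuousOn f D ∧ ∀ A ⊆ D, TBounded C A → 0 < tauMNC C A →
    tauMNC C (f '' A) < tauMNC C A

/-- `f` is nonexpansive with respect to Thompson's metric on `D`. -/
def TNonexpansiveOn (C : Set X) (f : X → X) (D : Set X) : Prop :=
  ∀ x ∈ D, ∀ y ∈ D, thompsonDist C (f x) (f y) ≤ thompsonDist C x y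

/-- `f` is order-preserving on `D` for the order induced by `C`. -/
def OrderPreservingOn (C : Set X) (f : X → X) (D : Set X) : Prop :=
  ∀ x ∈ D, ∀ y ∈ D, y - x ∈ C → f y - f x ∈ C

/-- `f` is subhomogeneous on `D`: `f (t • x) ≤ t • f x` for `t ≥ 1`. -/
def SubhomogeneousOn (C : Set X) (f : X → X) (D : Set X) : Prop :=
  ∀ t : ℝ, 1 ≤ t → ∀ x ∈ D, t • f x - f (t • x) ∈ C

/-- `M(x/y) = inf {β > 0 : x ≤ β • y}`, valued in `ℝ≥0∞` (`⊤` if no such `β` exists). -/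
noncomputable def Mratio (C : Set X) (x y : X) : ENNReal :=
  sInf {b : ENNReal | ∃ β : ℝ, 0 < β ∧ b = ENNReal.ofReal β ∧ β • y - x ∈ C}

/-- `m(x/y) = sup {α > 0 : α • y ≤ x}`, valued in `ℝ≥0∞`. -/
noncomputable def mratio (C : Set X) (x y : X) : ENNReal :=
  sSup {b : ENNReal | ∃ α : ℝ, 0 < α ∧ b = ENNReal.ofReal α ∧ x - α • y ∈ C}

/-- The upper Collatz–Wielandt number `r(f) = inf_{x ∈ int C} M(f(x)/x)`. -/
noncomputable def upperCW (C : Set X) (f : X → X) : ENNReal :=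
  ⨅ x ∈ interior C, Mratio C (f x) x

/-- The lower Collatz–Wielandt number `λ(f) = sup_{x ∈ int C} m(f(x)/x)`. -/
noncomputable def lowerCW (C : Set X) (f : X → X) : ENNReal :=
  ⨆ x ∈ interior C, mratio C (f x) x

/-- The order-unit norm `‖x‖_u = inf {k > 0 : -k • u ≤ x ≤ k • u}`. -/
noncomputable def orderUnitNorm (C : Set X) (u x : X) : ℝ :=
  sInf {k : ℝ | 0 < k ∧ x + k • u ∈ C ∧ k • u - x ∈ C}

end ConeDefs

section ConeLemmas

variable {X : Type*} [NormedAddCommGroup X] [NormedSpace ℝ X] {C : Set X}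

lemma IsClosedCone.smul_mem (hC : IsClosedCone C) {l : ℝ} (hl : 0 ≤ l) {a : X} (ha : a ∈ C) :
    l • a ∈ C :=
  hC.2.2.1 l hl a ha

lemma IsClosedCone.add_mem (hC : IsClosedCone C) {a b : X} (ha : a ∈ C) (hb : b ∈ C) :
    a + b ∈ C := by
  have h : (1 / 2 : ℝ) • a + (1 / 2 : ℝ) • b ∈ C :=
    hC.2.1 ha hb (by norm_num) (by norm_num) (by norm_num)
  have h2 := hC.smul_mem (l := 2) (by norm_num) h
  rwa [smul_add, smul_smul, smul_smul, mul_one_div_cancel two_ne_zero, one_smul, one_smul] at h2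

lemma IsClosedCone.add_smul_mem_interior (hC : IsClosedCone C) {a b : X} (ha : a ∈ interior C)
    (hb : b ∈ C) {c : ℝ} (hc : 0 < c) : b + c • a ∈ interior C := by
  -- `z ↦ c⁻¹ • (z - b)` pulls `interior C` back to the open set `b + c • interior C ⊆ C`.
  have hopen : IsOpen ((fun z : X => c⁻¹ • (z - b)) ⁻¹' interior C) :=
    isOpen_interior.preimage (by fun_prop)
  refine interior_maximal ?_ hopen ?_
  · intro z hz
    have h := hC.add_mem hb (hC.smul_mem hc.le (interior_subset hz))
    rwa [smul_inv_smul₀ hc.ne', add_sub_cancel] at h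
  · simpa [inv_smul_smul₀ hc.ne'] using ha

/-- Every interior point of `C` is an order unit. -/
lemma exists_pos_sub_smul_mem {u : X} (hu : u ∈ interior C) (v : X) :
    ∃ ε : ℝ, 0 < ε ∧ u - ε • v ∈ C := by
  have ht : Tendsto (fun ε : ℝ => u - ε • v) (𝓝[>] 0) (𝓝 u) := by
    have h : Continuous (fun ε : ℝ => u - ε • v) := by fun_prop
    simpa using (h.tendsto 0).mono_left nhdsWithin_le_nhds
  have h := (ht.eventually (mem_interior_iff_mem_nhds.mp hu)).and self_mem_nhdsWithin
  obtain ⟨ε, h1, h2⟩ := h.exists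
  exact ⟨ε, h2, h1⟩

/-- For a nonzero interior point `x`, there is a largest `s` with `s • x ≤ y`, and it is positive
when `y` is interior. -/
lemma IsClosedCone.exists_isGreatest (hC : IsClosedCone C) {x y : X} (hx : x ∈ interior C)
    (hy : y ∈ interior C) (hx0 : x ≠ 0) :
    ∃ s : ℝ, 0 < s ∧ IsGreatest {t : ℝ | y - t • x ∈ C} s := by
  obtain ⟨δ, hδ, hδC⟩ := exists_pos_sub_smul_mem hy x
  obtain ⟨ε, hε, hεC⟩ := exists_pos_sub_smul_mem hx y
  have hclosed : IsClosed {t : ℝ | y - t • x ∈ C} :=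
    hC.1.preimage (f := fun t : ℝ => y - t • x) (by fun_prop)
  have hbdd : BddAbove {t : ℝ | y - t • x ∈ C} := by
    refine ⟨ε⁻¹, fun t ht => ?_⟩
    by_contra! hlt
    have hpos : 0 < ε * t - 1 := by
      have := mul_lt_mul_of_pos_left hlt hε
      rw [mul_inv_cancel₀ hε.ne'] at this
      linarith
    -- The sum of `x - ε • y` and `ε • (y - t • x)` is a negative multiple of `x`.
    have h := hC.smul_mem (inv_nonneg.mpr hpos.le) (hC.add_mem hεC (hC.smul_mem hε.le ht))
    have he : x - ε • y + ε • (y - t • x) = (ε * t - 1) • (-x) := by module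
    rw [he, inv_smul_smul₀ hpos.ne'] at h
    have h0 : x ∈ C ∩ -C := ⟨interior_subset hx, h⟩
    rw [hC.2.2.2] at h0
    exact hx0 h0
  exact ⟨_, hδ.trans_le (le_csSup hbdd hδC), hclosed.csSup_mem ⟨δ, hδC⟩ hbdd,
    fun t ht => le_csSup hbdd ht⟩

end ConeLemmas

/-- If `f` is order-preserving and subhomogeneous on `int C`, `f x ≥ α • x` and
`f y ≤ β • y` with `α > β > 0`, then `y - x ∈ interior C`. -/
theorem stmt10 {X : Type*} [NormedAddCommGroup X] [NormedSpace ℝ X] [CompleteSpace X]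
    {C : Set X} (hC : IsClosedCone C) (hne : (interior C).Nonempty)
    {f : X → X} (hf : Set.MapsTo f (interior C) (interior C))
    (hop : OrderPreservingOn C f (interior C))
    (hsub : SubhomogeneousOn C f (interior C))
    {x y : X} (hx : x ∈ interior C) (hy : y ∈ interior C)
    {α β : ℝ} (hβ0 : 0 < β) (hβα : β < α)
    (hfx : f x - α • x ∈ C) (hfy : β • y - f y ∈ C) :
    y - x ∈ interior C := by
  -- In the zero space `x = 0` can be an interior point.
  by_cases hx0 : x = 0
  · simpa [hx0] using hy
  obtain ⟨s, hs, hsC, hmax⟩ := hC.exists_isGreatest hx hy hx0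
  have hs1 : 1 < s := by
    by_contra! hle
    have hyi : s⁻¹ • y ∈ interior C := by
      simpa using hC.add_smul_mem_interior hy
        (by simpa using hC.smul_mem le_rfl (interior_subset hx) : (0 : X) ∈ C) (inv_pos.mpr hs)
    have h1 : s⁻¹ • y - x ∈ C := by
      have h := hC.smul_mem (inv_nonneg.mpr hs.le) hsC
      rwa [smul_sub, inv_smul_smul₀ hs.ne'] at h
    have h2 := hop x hx _ hyi h1
    have h3 := hsub s⁻¹ ((one_le_inv₀ hs).mpr hle) y hy
    have h4 := hC.smul_mem (inv_nonneg.mpr hs.le) hfy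
    have h5 := hC.add_mem (hC.add_mem hfx h2) (hC.add_mem h3 h4)
    have h6 := hC.smul_mem (mul_pos hs (inv_pos.mpr hβ0)).le h5
    have he : (s * β⁻¹) • (f x - α • x + (f (s⁻¹ • y) - f x) +
        (s⁻¹ • f y - f (s⁻¹ • y) + s⁻¹ • (β • y - f y))) = y - (s * (α / β)) • x := by
      have e : f x - α • x + (f (s⁻¹ • y) - f x) +
          (s⁻¹ • f y - f (s⁻¹ • y) + s⁻¹ • (β • y - f y)) = (s⁻¹ * β) • y - α • x := by module
      rw [e, smul_sub, smul_smul, smul_smul]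
      have e1 : s * β⁻¹ * (s⁻¹ * β) = 1 := by field_simp
      have e2 : s * β⁻¹ * α = s * (α / β) := by ring
      rw [e1, e2, one_smul]
    rw [he] at h6
    have h7 : s * (α / β) ≤ s := hmax h6
    have h8 : 1 < α / β := (one_lt_div hβ0).mpr hβα
    nlinarith
  have h := hC.add_smul_mem_interior hx hsC (sub_pos.mpr hs1)
  have he : y - s • x + (s - 1) • x = y - x := by module
  rwa [he] at h
end

section
/- Let C be a closed, regular cone with nonempty interior in a real Banach space and let f : int C → int C be order-preserving and subhomogeneous. Then for every x ∈ int C the limit f_∞(x) = lim_{t→∞} t⁻¹ f(tx) exists in C; the resulting map f_∞ : int C → C is order-preserving and homogeneous (f_∞(λx) = λ f_∞(x) for all λ > 0); and r(f) = r(f_∞). -/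
/-!
For fixed `x ∈ int C`, subhomogeneity makes the path `t ↦ t⁻¹ • f (t • x)` decreasing on `[1, ∞)`,
and `exists_tendsto_of_antitone` turns regularity (a statement about sequences) into convergence
along the real parameter. Order preservation and homogeneity of the limit `g` pass to the limit.
The path starts at `f x`, so `g ≤ f` and `r(g) ≤ r(f)`. Conversely, if `g x ≤ β • x` and `ε > 0`,
then `ε • x` is interior to `C` and absorbs the error `t⁻¹ • f (t • x) - g x` for large `t`, so
`f (t • x) ≤ (β + ε) • (t • x)`, which gives `r(f) ≤ β + ε`.
-/

open Filter Topology Bornology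

theorem IsClosedCone.add_mem_s12 {X : Type*} [NormedAddCommGroup X] [NormedSpace ℝ X]
    {C : Set X} (hC : IsClosedCone C) {x y : X} (hx : x ∈ C) (hy : y ∈ C) : x + y ∈ C := by
  obtain ⟨-, hconv, hsmul, -⟩ := hC
  have h := hsmul 2 (by norm_num) _
    (hconv hx hy (by norm_num : (0 : ℝ) ≤ 1 / 2) (by norm_num : (0 : ℝ) ≤ 1 / 2) (by norm_num))
  convert h using 1
  module

theorem IsClosedCone.smul_mem_interior {X : Type*} [NormedAddCommGroup X] [NormedSpace ℝ X]
    {C : Set X} (hC : IsClosedCone C) {l : ℝ} (hl : 0 < l) {x : X} (hx : x ∈ interior C) :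
    l • x ∈ interior C := by
  have h1 : (fun y : X => l • y) '' interior C ⊆ C := by
    rintro _ ⟨y, hy, rfl⟩
    exact hC.2.2.1 l hl.le y (interior_subset hy)
  have h2 : IsOpen ((fun y : X => l • y) '' interior C) :=
    isOpenMap_smul₀ hl.ne' _ isOpen_interior
  exact interior_maximal h1 h2 ⟨x, hx, rfl⟩

/-- In a regular cone, a path decreasing on `[1, ∞)` converges at infinity: otherwise one could
extract a decreasing sequence whose consecutive terms stay `ε` apart. -/
theorem exists_tendsto_of_antitone {X : Type*} [NormedAddCommGroup X] [NormedSpace ℝ X]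
    [CompleteSpace X] {C : Set X} (hreg : IsRegularCone C) (h : ℝ → X)
    (hmem : ∀ t, 1 ≤ t → h t ∈ C) (hanti : ∀ s t, 1 ≤ s → s ≤ t → h s - h t ∈ C) :
    ∃ l : X, Tendsto h atTop (𝓝 l) := by
  have key : ∀ ε > 0, ∃ T, 1 ≤ T ∧ ∀ t, T ≤ t → dist (h t) (h T) < ε := by
    by_contra! hcon
    obtain ⟨ε, hε, hcon⟩ := hcon
    choose! φ hφ1 hφ2 using hcon
    let u : ℕ → ℝ := fun n => φ^[n] 1
    have hu : ∀ n, u (n + 1) = φ (u n) := fun n => Function.iterate_succ_apply' φ n 1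
    have hu1 : ∀ n, 1 ≤ u n := by
      intro n
      induction n with
      | zero => exact le_refl _
      | succ n ih => rw [hu]; exact ih.trans (hφ1 _ ih)
    obtain ⟨l, hl⟩ := hreg (fun n => h (u n)) (fun n => hmem _ (hu1 n))
      (fun n => hanti _ _ (hu1 n) (by rw [hu]; exact hφ1 _ (hu1 n)))
    have h0 : Tendsto (fun n => dist (h (u (n + 1))) (h (u n))) atTop (𝓝 0) := by
      simpa using (hl.comp (tendsto_add_atTop_nat 1)).dist hl
    obtain ⟨n, hn⟩ := (h0.eventually (gt_mem_nhds hε)).exists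
    rw [hu] at hn
    exact absurd hn (not_lt.mpr (hφ2 _ (hu1 n)))
  refine cauchy_map_iff_exists_tendsto.mp (Metric.cauchy_iff.mpr ⟨inferInstance, fun ε hε => ?_⟩)
  obtain ⟨T, -, hT⟩ := key (ε / 2) (half_pos hε)
  refine ⟨h '' Set.Ici T, image_mem_map (Ici_mem_atTop T), ?_⟩
  rintro _ ⟨s, hs, rfl⟩ _ ⟨t, ht, rfl⟩
  have := dist_triangle_right (h s) (h t) (h T)
  linarith [hT s hs, hT t ht]

/-- Subhomogeneity says exactly that the path `t ↦ t⁻¹ • f (t • x)` decreases. -/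
theorem SubhomogeneousOn.antitone {X : Type*} [NormedAddCommGroup X] [NormedSpace ℝ X]
    {C : Set X} (hC : IsClosedCone C) {f : X → X} (hsub : SubhomogeneousOn C f (interior C))
    {x : X} (hx : x ∈ interior C) {s t : ℝ} (hs : 0 < s) (hst : s ≤ t) :
    s⁻¹ • f (s • x) - t⁻¹ • f (t • x) ∈ C := by
  have ht : 0 < t := hs.trans_le hst
  have h := hC.2.2.1 t⁻¹ (inv_nonneg.mpr ht.le) _
    (hsub (t / s) ((one_le_div hs).mpr hst) _ (hC.smul_mem_interior hs hx))
  rw [smul_smul, div_mul_cancel₀ _ hs.ne', smul_sub, smul_smul] at h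
  rwa [show t⁻¹ * (t / s) = s⁻¹ by field_simp] at h

/-- The numbers `M(g x / x)` bound `r(f)` from above when `g x` is the limit of
`t⁻¹ • f (t • x)`. -/
theorem upperCW_le_Mratio {X : Type*} [NormedAddCommGroup X] [NormedSpace ℝ X]
    {C : Set X} (hC : IsClosedCone C) {f : X → X} {x y : X} (hx : x ∈ interior C)
    (hy : Tendsto (fun t : ℝ => t⁻¹ • f (t • x)) atTop (𝓝 y)) :
    upperCW C f ≤ Mratio C y x := by
  refine le_sInf ?_
  rintro _ ⟨β, hβ, rfl, hβy⟩
  refine ENNReal.le_of_forall_pos_le_add fun ε hε _ => ?_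
  have hε' : (0 : ℝ) < ε := hε
  have hlim : Tendsto (fun t : ℝ => (ε : ℝ) • x + (y - t⁻¹ • f (t • x))) atTop
      (𝓝 ((ε : ℝ) • x)) := by
    simpa using (tendsto_const_nhds (x := y)).sub hy |>.const_add ((ε : ℝ) • x)
  have hev := hlim.eventually
    (isOpen_interior.mem_nhds (hC.smul_mem_interior hε' hx))
  obtain ⟨t, ht, ht0⟩ := (hev.and (eventually_gt_atTop 0)).exists
  have h1 := hC.2.2.1 t ht0.le _ (hC.add_mem_s12 (interior_subset ht) hβy)
  have h2 : (β + ε) • t • x - f (t • x) ∈ C := by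
    convert h1 using 1
    have h3 : f (t • x) = t • t⁻¹ • f (t • x) := (smul_inv_smul₀ ht0.ne' _).symm
    generalize t⁻¹ • f (t • x) = z at h3 ⊢
    rw [h3]
    module
  calc upperCW C f ≤ Mratio C (f (t • x)) (t • x) :=
        iInf₂_le (t • x) (hC.smul_mem_interior ht0 hx)
    _ ≤ ENNReal.ofReal (β + ε) := sInf_le ⟨β + ε, by positivity, rfl, h2⟩
    _ = ENNReal.ofReal β + ε := by
        rw [ENNReal.ofReal_add hβ.le hε'.le, ENNReal.ofReal_coe_nnreal]

/-- For a regular closed cone with nonempty interior and an order-preserving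
subhomogeneous `f : int C → int C`, the recession map `f_∞(x) = lim_{t→∞} t⁻¹ • f (t • x)`
exists on `int C`, takes values in `C`, is order-preserving and homogeneous, and
`r(f) = r(f_∞)`. -/
theorem stmt12 {X : Type*} [NormedAddCommGroup X] [NormedSpace ℝ X] [CompleteSpace X]
    {C : Set X} (hC : IsClosedCone C) (hreg : IsRegularCone C)
    (hne : (interior C).Nonempty) {f : X → X}
    (hf : Set.MapsTo f (interior C) (interior C))
    (hop : OrderPreservingOn C f (interior C))
    (hsub : SubhomogeneousOn C f (interior C)) :
    ∃ g : X → X,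
      (∀ x ∈ interior C, Tendsto (fun t : ℝ => t⁻¹ • f (t • x)) atTop (𝓝 (g x))) ∧
      (∀ x ∈ interior C, g x ∈ C) ∧
      OrderPreservingOn C g (interior C) ∧
      (∀ l : ℝ, 0 < l → ∀ x ∈ interior C, g (l • x) = l • g x) ∧
      upperCW C f = upperCW C g := by
  have hC0 := hC.1
  have hmem : ∀ x ∈ interior C, ∀ t : ℝ, 0 < t → t⁻¹ • f (t • x) ∈ C := fun x hx t ht =>
    hC.2.2.1 _ (inv_nonneg.mpr ht.le) _ (interior_subset (hf (hC.smul_mem_interior ht hx)))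
  have hex : ∀ x ∈ interior C, ∃ l : X,
      Tendsto (fun t : ℝ => t⁻¹ • f (t • x)) atTop (𝓝 l) := fun x hx =>
    exists_tendsto_of_antitone hreg _ (fun t ht => hmem x hx t (one_pos.trans_le ht))
      (fun s t hs hst => hsub.antitone hC hx (one_pos.trans_le hs) hst)
  choose! g hg using hex
  refine ⟨g, hg, fun x hx => ?_, fun x hx y hy hxy => ?_, fun l hl x hx => ?_, le_antisymm ?_ ?_⟩
  · exact hC0.mem_of_tendsto (hg x hx) ((eventually_gt_atTop 0).mono (hmem x hx))
  · refine hC0.mem_of_tendsto ((hg y hy).sub (hg x hx)) ?_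
    filter_upwards [eventually_gt_atTop 0] with t ht
    rw [← smul_sub]
    refine hC.2.2.1 _ (inv_nonneg.mpr ht.le) _
      (hop _ (hC.smul_mem_interior ht hx) _ (hC.smul_mem_interior ht hy) ?_)
    rw [← smul_sub]
    exact hC.2.2.1 _ ht.le _ hxy
  · refine tendsto_nhds_unique (hg _ (hC.smul_mem_interior hl hx)) ?_
    -- Substitute `t * l` for the parameter in the limit defining `g x`.
    refine (((hg x hx).comp (tendsto_id.atTop_mul_const hl)).const_smul l).congr fun t => ?_
    simp only [Function.comp_apply, id_eq, smul_smul]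
    rw [mul_inv, mul_comm t⁻¹, mul_inv_cancel_left₀ hl.ne']
  · exact le_iInf₂ fun x hx => upperCW_le_Mratio hC hx (hg x hx)
  · refine iInf₂_mono fun x hx => sInf_le_sInf ?_
    rintro _ ⟨β, hβ, rfl, h⟩
    refine ⟨β, hβ, rfl, ?_⟩
    have hfg : f x - g x ∈ C := by
      refine hC0.mem_of_tendsto ((hg x hx).const_sub (f x)) ?_
      filter_upwards [eventually_ge_atTop 1] with t ht
      simpa using hsub.antitone hC hx one_pos ht
    simpa using hC.add_mem_s12 h hfg
end

section
/- Let C be a closed cone with nonempty interior in a finite dimensional real normed space and let f : int C → int C be real analytic and nonexpansive with respect to Thompson's metric d_T. Then f has a unique fixed point in int C if and only if the fixed point set Fix(f) is nonempty and bounded in d_T. -/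
/-!
Two distinct fixed points `x`, `y` of `f` force fixed points arbitrarily far away in Thompson's
metric.

Let `d_T(x, y) = log r` with `r > 1`. By Hahn-Banach there is a positive functional `ψ` with, up to
exchanging `x` and `y`, `ψ y = r * ψ x` (`exists_tight`). The points lie on the geodesic line
`γ u = u • a + u⁻¹ • b`, `u > 0`, with `a, b ∈ C`, `γ 1 = x` and `γ r = y`. If `g` is analytic and
nonexpansive and fixes `x` and `y`, then for `1 ≤ u ≤ r` the distances from `g (γ u)` to `x` and `y`
leave only the value `ψ (g (γ u)) = u * ψ x`, and by the identity theorem this holds for all `u > 0`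
(`tight_along_curve`).

This is applied to all iterates of the average `g z = (z + f z) / 2`. This map is again analytic and
nonexpansive, and has the same fixed points as `f`. The orbit of `γ u` under `g` is bounded, hence
relatively compact in `interior C`. At an accumulation point `p` the steps of the orbit have constant
length, and a bounded orbit of an averaged map with this property is constant
(`eq_of_constant_steps`, an Ishikawa type argument). So `p` is a fixed point of `f` with
`ψ p = u * ψ x`, and letting `u → ∞` contradicts the boundedness of the fixed point set.
-/

open Filter Topology Bornology

section Helpers

/-! ### The cone order and Thompson's metric -/

variable {X : Type*} [NormedAddCommGroup X] [NormedSpace ℝ X]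

/-- The relation `d_T(x, y) ≤ log β`, freed of the logarithm and the infimum and written symmetrically:
`y ≤ β • x` and `x ≤ β • y`. -/
def ThompsonLE (C : Set X) (β : ℝ) (x y : X) : Prop :=
  β • x - y ∈ C ∧ β • y - x ∈ C

theorem ThompsonLE.symm {C : Set X} {β : ℝ} {x y : X} (h : ThompsonLE C β x y) :
    ThompsonLE C β y x := ⟨h.2, h.1⟩

variable {C : Set X}

theorem cone_smul (hC : IsClosedCone C) {t : ℝ} (ht : 0 ≤ t) {x : X} (hx : x ∈ C) :
    t • x ∈ C := hC.2.2.1 t ht x hx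

theorem cone_add (hC : IsClosedCone C) {x y : X} (hx : x ∈ C) (hy : y ∈ C) : x + y ∈ C := by
  have h := hC.2.1 hx hy (by norm_num : (0 : ℝ) ≤ 1 / 2) (by norm_num : (0 : ℝ) ≤ 1 / 2)
    (by norm_num)
  have h2 := cone_smul hC (by norm_num : (0 : ℝ) ≤ 2) h
  convert h2 using 1
  module

theorem cone_antisymm (hC : IsClosedCone C) {x : X} (hx : x ∈ C) (hx' : -x ∈ C) : x = 0 := by
  have : x ∈ C ∩ (-C) := ⟨hx, hx'⟩
  rw [hC.2.2.2] at this
  exact this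

theorem interior_add (hC : IsClosedCone C) {x y : X} (hx : x ∈ interior C) (hy : y ∈ C) :
    x + y ∈ interior C := by
  have ho : IsOpen ((fun z => z + y) '' interior C) :=
    (Homeomorph.addRight y).isOpenMap _ isOpen_interior
  have hs : (fun z => z + y) '' interior C ⊆ C := by
    rintro _ ⟨z, hz, rfl⟩
    exact cone_add hC (interior_subset hz) hy
  exact interior_maximal hs ho ⟨x, hx, rfl⟩

theorem interior_smul_pos (hC : IsClosedCone C) {t : ℝ} (ht : 0 < t) {x : X}
    (hx : x ∈ interior C) : t • x ∈ interior C := by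
  have ho : IsOpen ((fun z => t • z) '' interior C) :=
    (Homeomorph.smulOfNeZero t ht.ne').isOpenMap _ isOpen_interior
  have hs : (fun z => t • z) '' interior C ⊆ C := by
    rintro _ ⟨z, hz, rfl⟩
    exact cone_smul hC ht.le (interior_subset hz)
  exact interior_maximal hs ho ⟨x, hx, rfl⟩

theorem ThompsonLE.mono (hC : IsClosedCone C) {β β' : ℝ} (hβ : β ≤ β') {x y : X}
    (hx : x ∈ C) (hy : y ∈ C) (h : ThompsonLE C β x y) : ThompsonLE C β' x y := by
  constructor
  · convert cone_add hC h.1 (cone_smul hC (sub_nonneg.2 hβ) hx) using 1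
    module
  · convert cone_add hC h.2 (cone_smul hC (sub_nonneg.2 hβ) hy) using 1
    module

theorem mem_thompson_iff (hC : IsClosedCone C) (x y : X) (β : ℝ) :
    (1 ≤ β ∧ y - β⁻¹ • x ∈ C ∧ β • x - y ∈ C) ↔ 1 ≤ β ∧ ThompsonLE C β x y := by
  refine and_congr_right fun h1 => ?_
  have h0 : 0 < β := by linarith
  rw [and_comm]
  refine and_congr_right fun _ => ⟨fun h => ?_, fun h => ?_⟩
  · convert cone_smul hC h0.le h using 1
    rw [smul_sub, smul_smul, mul_inv_cancel₀ h0.ne', one_smul]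
  · convert cone_smul hC (inv_nonneg.2 h0.le) h using 1
    rw [smul_sub, smul_smul, inv_mul_cancel₀ h0.ne', one_smul]

/-- Every interior point of the cone is an order unit. -/
theorem exists_dominate (hC : IsClosedCone C) {x : X} (hx : x ∈ interior C) (y : X) :
    ∃ β : ℝ, 1 ≤ β ∧ β • x - y ∈ C := by
  have hc : Tendsto (fun t : ℝ => x - t • y) (𝓝 0) (𝓝 x) := by
    have : Continuous (fun t : ℝ => x - t • y) := by fun_prop
    simpa using this.tendsto 0
  have he : ∀ᶠ t : ℝ in 𝓝[>] 0, x - t • y ∈ interior C ∧ t ∈ Set.Ioo (0 : ℝ) 1 :=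
    ((hc.mono_left nhdsWithin_le_nhds).eventually (isOpen_interior.mem_nhds hx)).and
      (Ioo_mem_nhdsGT one_pos)
  obtain ⟨t, ht, h0, h1⟩ := he.exists
  refine ⟨t⁻¹, (one_le_inv₀ h0).2 h1.le, ?_⟩
  convert cone_smul hC (inv_nonneg.2 h0.le) (interior_subset ht) using 1
  rw [smul_sub, smul_smul, inv_mul_cancel₀ h0.ne', one_smul]

/-- The infimum defining `d_T(x, y)` is attained on `interior C`, so `d_T(x, y) = log r` for the least
`r ≥ 1` with `ThompsonLE C r x y`. -/
theorem thompson_attained (hC : IsClosedCone C) {x y : X} (hx : x ∈ interior C)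
    (hy : y ∈ interior C) :
    ∃ r : ℝ, 1 ≤ r ∧ ThompsonLE C r x y ∧ thompsonDist C x y = Real.log r ∧
      ∀ β, 1 ≤ β → ThompsonLE C β x y → r ≤ β := by
  have hset : {β : ℝ | 1 ≤ β ∧ y - β⁻¹ • x ∈ C ∧ β • x - y ∈ C} =
      {β : ℝ | 1 ≤ β ∧ ThompsonLE C β x y} := by
    ext β
    exact mem_thompson_iff hC x y β
  set S := {β : ℝ | 1 ≤ β ∧ ThompsonLE C β x y} with hS
  have hne : S.Nonempty := by
    obtain ⟨b, hb, hb'⟩ := exists_dominate hC hx y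
    obtain ⟨c, hc, hc'⟩ := exists_dominate hC hy x
    refine ⟨b + c, by linarith, ?_, ?_⟩
    · convert cone_add hC hb' (cone_smul hC (zero_le_one.trans hc) (interior_subset hx)) using 1
      module
    · convert cone_add hC hc' (cone_smul hC (zero_le_one.trans hb) (interior_subset hy)) using 1
      module
  have hbdd : BddBelow S := ⟨1, fun β h => h.1⟩
  have hcl : IsClosed S := by
    have h1 : IsClosed {β : ℝ | β • x - y ∈ C} := hC.1.preimage (by fun_prop)
    have h2 : IsClosed {β : ℝ | β • y - x ∈ C} := hC.1.preimage (by fun_prop)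
    exact (isClosed_le continuous_const continuous_id).inter (h1.inter h2)
  have hmem := hcl.csInf_mem hne hbdd
  refine ⟨sInf S, hmem.1, hmem.2, ?_, fun β h1 h => csInf_le hbdd ⟨h1, h⟩⟩
  rw [thompsonDist, hset]

/-- Nonexpansiveness of `g` in Thompson's metric, expressed through the relation `ThompsonLE`. -/
def ThompsonNonexp (C : Set X) (g : X → X) : Prop :=
  ∀ x ∈ interior C, ∀ y ∈ interior C, ∀ β : ℝ, 1 ≤ β → ThompsonLE C β x y →
    ThompsonLE C β (g x) (g y)

theorem thompsonNonexp_of (hC : IsClosedCone C) {f : X → X}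
    (hf : Set.MapsTo f (interior C) (interior C)) (hfn : TNonexpansiveOn C f (interior C)) :
    ThompsonNonexp C f := by
  intro x hx y hy β hβ h
  obtain ⟨r, hr1, -, hrd, hrm⟩ := thompson_attained hC hx hy
  obtain ⟨s, hs1, hs, hsd, -⟩ := thompson_attained hC (hf hx) (hf hy)
  have hd := hfn x hx y hy
  rw [hrd, hsd, Real.log_le_log_iff (by linarith) (by linarith)] at hd
  exact hs.mono hC (hd.trans (hrm β hβ h)) (interior_subset (hf hx)) (interior_subset (hf hy))

/-- Averaging with the identity preserves nonexpansiveness, since inequalities `y ≤ β • x` and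
`f y ≤ β • f x` can be added. -/
theorem thompsonNonexp_average (hC : IsClosedCone C) {f : X → X} (hf : ThompsonNonexp C f) :
    ThompsonNonexp C (fun x => (1 / 2 : ℝ) • (x + f x)) := by
  intro x hx y hy β hβ h
  have h' := hf x hx y hy β hβ h
  constructor
  · convert cone_smul hC (by norm_num : (0 : ℝ) ≤ 1 / 2) (cone_add hC h.1 h'.1) using 1
    module
  · convert cone_smul hC (by norm_num : (0 : ℝ) ≤ 1 / 2) (cone_add hC h.2 h'.2) using 1
    module

theorem thompsonNonexp_iterate {g : X → X}
    (hm : Set.MapsTo g (interior C) (interior C)) (hg : ThompsonNonexp C g) (n : ℕ) :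
    ThompsonNonexp C (g^[n]) := by
  induction n with
  | zero => exact fun x _ y _ β _ h => h
  | succ k ih =>
    intro x hx y hy β hβ h
    exact ih _ (hm hx) _ (hm hy) β hβ (hg x hx y hy β hβ h)

/-- A boundary point of the cone is annihilated by a positive functional, which is then strictly
positive on the interior. -/
theorem exists_functional (hC : IsClosedCone C) {z : X} (hne : (interior C).Nonempty)
    (hz : z ∈ C) (hz' : z ∉ interior C) :
    ∃ ψ : X →L[ℝ] ℝ, (∀ x ∈ C, 0 ≤ ψ x) ∧ (∀ x ∈ interior C, 0 < ψ x) ∧ ψ z = 0 := by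
  obtain ⟨φ, hφ⟩ := geometric_hahn_banach_open_point hC.2.1.interior isOpen_interior hz'
  have hle : ∀ x ∈ interior C, φ x ≤ 0 := by
    intro x hx
    by_contra! h
    have ht : 0 < (|φ z| + 1) / φ x := by positivity
    have := hφ _ (interior_smul_pos hC ht hx)
    rw [map_smul, smul_eq_mul, div_mul_cancel₀ _ h.ne'] at this
    linarith [le_abs_self (φ z)]
  have hcl : ∀ x ∈ C, φ x ≤ 0 := by
    intro x hx
    have : x ∈ closure (interior C) := by
      rw [hC.2.1.closure_interior_eq_closure_of_nonempty_interior hne]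
      exact subset_closure hx
    exact closure_minimal (t := {x | φ x ≤ 0}) hle (isClosed_le φ.continuous continuous_const) this
  have hz0 : 0 ≤ φ z := by
    obtain ⟨x, hx⟩ := hne
    by_contra! h
    have hc : Tendsto (fun t : ℝ => t * φ x) (𝓝[>] 0) (𝓝 0) := by
      have : Continuous (fun t : ℝ => t * φ x) := by fun_prop
      simpa using (this.tendsto 0).mono_left nhdsWithin_le_nhds
    obtain ⟨t, ht, ht0⟩ := ((hc.eventually (lt_mem_nhds h)).and self_mem_nhdsWithin).exists
    have := hφ _ (interior_smul_pos hC ht0 hx)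
    rw [map_smul, smul_eq_mul] at this
    linarith
  have hzz : φ z = 0 := le_antisymm (hcl z hz) hz0
  refine ⟨-φ, fun x hx => by simpa using hcl x hx, fun x hx => ?_, by simp [hzz]⟩
  have := hφ x hx
  rw [hzz] at this
  simpa using this

/-- Thompson's distance of two interior points is witnessed by a positive functional: if it were not,
both `r • x - y` and `r • y - x` would be interior and `r` could be decreased. -/
theorem exists_tight (hC : IsClosedCone C) {x y : X} (hx : x ∈ interior C)
    {r : ℝ} (hr : 1 < r) (h : ThompsonLE C r x y)
    (hmin : ∀ β, 1 ≤ β → ThompsonLE C β x y → r ≤ β) :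
    ∃ ψ : X →L[ℝ] ℝ, (∀ z ∈ C, 0 ≤ ψ z) ∧ (∀ z ∈ interior C, 0 < ψ z) ∧
      (ψ y = r * ψ x ∨ ψ x = r * ψ y) := by
  have key : r • x - y ∉ interior C ∨ r • y - x ∉ interior C := by
    by_contra! hcon
    have c1 : Continuous (fun β : ℝ => β • x - y) := by fun_prop
    have c2 : Continuous (fun β : ℝ => β • y - x) := by fun_prop
    have e1 := (c1.tendsto r).eventually (isOpen_interior.mem_nhds hcon.1)
    have e2 := (c2.tendsto r).eventually (isOpen_interior.mem_nhds hcon.2)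
    have e : ∀ᶠ β in 𝓝[<] r, ThompsonLE C β x y ∧ β ∈ Set.Ioo 1 r := by
      filter_upwards [nhdsWithin_le_nhds e1, nhdsWithin_le_nhds e2, Ioo_mem_nhdsLT hr]
        with β h1 h2 h3
      exact ⟨⟨interior_subset h1, interior_subset h2⟩, h3⟩
    obtain ⟨β, hβ, h1, h2⟩ := e.exists
    linarith [hmin β h1.le hβ]
  rcases key with hk | hk
  · obtain ⟨ψ, p, q, hz⟩ := exists_functional hC ⟨x, hx⟩ h.1 hk
    refine ⟨ψ, p, q, Or.inl ?_⟩
    simp only [map_sub, map_smul, smul_eq_mul] at hz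
    linarith
  · obtain ⟨ψ, p, q, hz⟩ := exists_functional hC ⟨x, hx⟩ h.2 hk
    refine ⟨ψ, p, q, Or.inr ?_⟩
    simp only [map_sub, map_smul, smul_eq_mul] at hz
    linarith

/-- Closed Thompson balls are norm compact. Boundedness is the normality of a pointed closed cone in
finite dimension: `-u` stays at distance at least some `c > 0` from `C` as `u` runs over the unit
vectors of `C`. -/
theorem isCompact_thompsonBall [FiniteDimensional ℝ X] (hC : IsClosedCone C) (w : X) (B : ℝ) :
    IsCompact {z : X | z ∈ C ∧ ThompsonLE C B w z} := by
  have hcl : IsClosed {z : X | z ∈ C ∧ ThompsonLE C B w z} := by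
    have h1 : IsClosed {z : X | B • w - z ∈ C} := hC.1.preimage (by fun_prop)
    have h2 : IsClosed {z : X | B • z - w ∈ C} := hC.1.preimage (by fun_prop)
    exact hC.1.inter (h1.inter h2)
  refine Metric.isCompact_of_isClosed_isBounded hcl ?_
  have hS : IsCompact (Metric.sphere (0 : X) 1 ∩ C) := (isCompact_sphere 0 1).inter_right hC.1
  have hcont : ContinuousOn (fun u : X => Metric.infDist (-u) C) (Metric.sphere (0 : X) 1 ∩ C) :=
    ((Metric.continuous_infDist_pt C).comp continuous_neg).continuousOn
  have hpos : ∀ u ∈ Metric.sphere (0 : X) 1 ∩ C, 0 < Metric.infDist (-u) C := by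
    intro u hu
    rw [← hC.1.notMem_iff_infDist_pos ⟨u, hu.2⟩]
    intro hn
    have := cone_antisymm hC hu.2 hn
    simp [this] at hu
  obtain ⟨c, hc, hcS⟩ := hS.exists_forall_le' hcont hpos
  rw [isBounded_iff_forall_norm_le]
  refine ⟨‖B • w‖ / c, ?_⟩
  rintro z ⟨hz, h1, -⟩
  rcases eq_or_ne z 0 with rfl | hz0
  · simp only [norm_zero]
    positivity
  have hn : 0 < ‖z‖ := norm_pos_iff.2 hz0
  have hu : ‖z‖⁻¹ • z ∈ Metric.sphere (0 : X) 1 ∩ C :=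
    ⟨by simp [norm_smul, hn.ne'], cone_smul hC (by positivity) hz⟩
  have h2 := cone_smul hC (inv_nonneg.2 hn.le) h1
  have h3 := (hcS _ hu).trans (Metric.infDist_le_dist_of_mem h2)
  have h4 : dist (-(‖z‖⁻¹ • z)) (‖z‖⁻¹ • (B • w - z)) = ‖z‖⁻¹ * ‖B • w‖ := by
    rw [dist_eq_norm, ← norm_neg, show -(-(‖z‖⁻¹ • z) - ‖z‖⁻¹ • (B • w - z)) = ‖z‖⁻¹ • (B • w) by
      module, norm_smul, norm_inv, norm_norm]
  rw [h4] at h3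
  rw [le_div_iff₀ hc]
  have := mul_le_mul_of_nonneg_left h3 hn.le
  rwa [← mul_assoc, mul_inv_cancel₀ hn.ne', one_mul] at this

/-! ### The geodesic line and rigidity along it -/

theorem mem_interior_of_thompson (hC : IsClosedCone C) {B : ℝ} (hB : 0 < B) {w z : X}
    (hw : w ∈ interior C) (h : ThompsonLE C B w z) : z ∈ interior C := by
  have h1 := interior_smul_pos hC (inv_pos.2 hB) (interior_add hC hw h.2)
  convert h1 using 1
  rw [add_sub_cancel, smul_smul, inv_mul_cancel₀ hB.ne', one_smul]

theorem curve_mem_interior (hC : IsClosedCone C) {a b : X} (ha : a ∈ C) (hb : b ∈ C)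
    (hab : a + b ∈ interior C) {u : ℝ} (hu : 0 < u) : u • a + u⁻¹ • b ∈ interior C := by
  have hui : 0 < u⁻¹ := inv_pos.2 hu
  have hm : 0 < min u u⁻¹ := lt_min hu hui
  have h := interior_add hC (interior_smul_pos hC hm hab)
    (cone_add hC (cone_smul hC (sub_nonneg.2 (min_le_left u u⁻¹)) ha)
      (cone_smul hC (sub_nonneg.2 (min_le_right u u⁻¹)) hb))
  convert h using 1
  module

/-- The curve `u ↦ u • a + u⁻¹ • b` satisfies `d_T(γ u, γ v) ≤ |log u - log v|`. -/
theorem curve_thompson (hC : IsClosedCone C) {a b : X} (ha : a ∈ C) (hb : b ∈ C)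
    {u v : ℝ} (hu : 0 < u) (huv : u ≤ v) :
    ThompsonLE C (v / u) (u • a + u⁻¹ • b) (v • a + v⁻¹ • b) := by
  have hv : 0 < v := hu.trans_le huv
  constructor
  · have h0 : 0 ≤ v / u * u⁻¹ - v⁻¹ := by
      have : v / u * u⁻¹ - v⁻¹ = (v - u) * (v + u) / (u ^ 2 * v) := by field_simp; ring
      rw [this]
      have := sub_nonneg.2 huv
      positivity
    convert cone_smul hC h0 hb using 1
    have h1 : v / u * u = v := div_mul_cancel₀ _ hu.ne'
    rw [smul_add, smul_smul, smul_smul, h1]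
    module
  · have h0 : 0 ≤ v / u * v - u := by
      have : v / u * v - u = (v - u) * (v + u) / u := by field_simp; ring
      rw [this]
      have := sub_nonneg.2 huv
      positivity
    convert cone_smul hC h0 ha using 1
    have h1 : v / u * v⁻¹ = u⁻¹ := by field_simp
    rw [smul_add, smul_smul, smul_smul, h1]
    module

/-- Let `γ u = u • a + u⁻¹ • b`, let `g` fix `γ 1` and `γ r`, and let `ψ` witness their distance. On
`[1, r]` nonexpansiveness towards both fixed points squeezes `ψ (g (γ u))` to `u * ψ (γ 1)`;
analyticity in `u` extends this identity to the whole line `u > 0`. -/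
theorem tight_along_curve (hC : IsClosedCone C) {g : X → X}
    (han : AnalyticOnNhd ℝ g (interior C)) (hg : ThompsonNonexp C g)
    {a b : X} (ha : a ∈ C) (hb : b ∈ C) (hab : a + b ∈ interior C) {r : ℝ} (hr : 1 < r)
    (hx : g (a + b) = a + b) (hy : g (r • a + r⁻¹ • b) = r • a + r⁻¹ • b)
    {ψ : X →L[ℝ] ℝ} (hψ : ∀ z ∈ C, 0 ≤ ψ z) (ht : ψ (r • a + r⁻¹ • b) = r * ψ (a + b))
    {u : ℝ} (hu : 0 < u) : ψ (g (u • a + u⁻¹ • b)) = u * ψ (a + b) := by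
  have hr0 : 0 < r := by linarith
  have hA : AnalyticOnNhd ℝ (fun t : ℝ => ψ (g (t • a + t⁻¹ • b))) (Set.Ioi 0) := by
    intro t ht0
    have ht0' : t ≠ 0 := (Set.mem_Ioi.1 ht0).ne'
    have h1 : AnalyticAt ℝ (fun t : ℝ => t • a + t⁻¹ • b) t :=
      (analyticAt_id.smul analyticAt_const).add ((analyticAt_inv ht0').smul analyticAt_const)
    have h2 : AnalyticAt ℝ g (t • a + t⁻¹ • b) := han _ (curve_mem_interior hC ha hb hab ht0)
    exact (ψ.analyticAt _).comp (h2.comp_of_eq h1 rfl)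
  have hB : AnalyticOnNhd ℝ (fun t : ℝ => t * ψ (a + b)) (Set.Ioi 0) :=
    fun t _ => analyticAt_id.mul analyticAt_const
  have hmid : (1 + r) / 2 ∈ Set.Ioi (0 : ℝ) := by
    simp only [Set.mem_Ioi]; linarith
  refine hA.eqOn_of_preconnected_of_eventuallyEq hB isPreconnected_Ioi hmid ?_ hu
  filter_upwards [Ioo_mem_nhds (show 1 < (1 + r) / 2 by linarith)
    (show (1 + r) / 2 < r by linarith)] with t ht1
  have ht0 : 0 < t := by linarith [ht1.1]
  have hti := curve_mem_interior hC ha hb hab ht0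
  have hri := curve_mem_interior hC ha hb hab hr0
  have e1 := curve_thompson hC ha hb one_pos ht1.1.le
  have e2 := curve_thompson hC ha hb ht0 ht1.2.le
  simp only [one_smul, inv_one, div_one] at e1
  have f1 := hψ _ (hg _ hab _ hti t ht1.1.le e1).1
  have f2 := hψ _ (hg _ hti _ hri (r / t) ((one_le_div ht0).2 ht1.2.le) e2).1
  rw [hx, map_sub, map_smul, smul_eq_mul] at f1
  rw [hy, map_sub, map_smul, smul_eq_mul, ht] at f2
  have f3 : r * ψ (a + b) ≤ r / t * ψ (g (t • a + t⁻¹ • b)) := by linarith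
  have f4 := mul_le_mul_of_nonneg_left f3 (div_pos ht0 hr0).le
  have f5 : t / r * (r * ψ (a + b)) = t * ψ (a + b) := by field_simp
  have f6 : t / r * (r / t * ψ (g (t • a + t⁻¹ • b))) = ψ (g (t • a + t⁻¹ • b)) := by field_simp
  rw [f5, f6] at f4
  linarith

/-! ### Fixed points as limits of averaged iterates -/

/-- A bounded orbit of the averaged map `z ↦ (z + f z) / 2` whose consecutive points all have the same
distance `log r` is constant. For `r > 1` a functional witnessing the distance at step `N` also
witnesses it at every earlier step, so it changes by a factor `r ^ N` along the orbit, which is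
impossible for large `N`. -/
theorem eq_of_constant_steps (hC : IsClosedCone C) {f : X → X} (hf : ThompsonNonexp C f)
    {p : ℕ → X} (hp : ∀ n, p n ∈ interior C)
    (hrec : ∀ n, p (n + 1) = (1 / 2 : ℝ) • (p n + f (p n)))
    {w : X} {B : ℝ} (hw : w ∈ interior C) (hB : 0 < B) (hbd : ∀ n, ThompsonLE C B w (p n))
    {r : ℝ} (hr : 1 ≤ r) (hstep : ∀ n, ThompsonLE C r (p n) (p (n + 1)))
    (hmin : ∀ n β, 1 ≤ β → ThompsonLE C β (p n) (p (n + 1)) → r ≤ β) : p 1 = p 0 := by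
  rcases hr.eq_or_lt with rfl | hr1
  · have h := hstep 0
    simp only [ThompsonLE, one_smul, zero_add] at h
    have := cone_antisymm hC h.2 (by simpa using h.1)
    exact sub_eq_zero.1 this
  exfalso
  obtain ⟨N, hN⟩ := pow_unbounded_of_one_lt (B * B) hr1
  obtain ⟨ψ, hψ, hψi, ht⟩ := exists_tight hC (hp N) hr1 (hstep N) (hmin N)
  have hpos : ∀ n, 0 < ψ (p n) := fun n => hψi _ (hp n)
  have hwpos := hψi w hw
  have b1 : ∀ n, ψ (p n) ≤ B * ψ w := fun n => by
    have := hψ _ (hbd n).1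
    rw [map_sub, map_smul, smul_eq_mul] at this
    linarith
  have b2 : ∀ n, ψ w ≤ B * ψ (p n) := fun n => by
    have := hψ _ (hbd n).2
    rw [map_sub, map_smul, smul_eq_mul] at this
    linarith
  have hff : ∀ n, ThompsonLE C r (f (p n)) (f (p (n + 1))) :=
    fun n => hf _ (hp n) _ (hp (n + 1)) r hr (hstep n)
  have e : ∀ n, ψ (p (n + 1)) = 1 / 2 * (ψ (p n) + ψ (f (p n))) := fun n => by
    rw [hrec, map_smul, map_add, smul_eq_mul]
  -- `p (n + 2)` and `p (n + 1)` are averages of `p (n + 1), f (p (n + 1))` and `p n, f (p n)`; the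
  -- inequalities between the two averaged terms hold separately, so equality of the averages
  -- forces equality in each of them.
  have hkey : ∀ n, (ψ (p (n + 2)) = r * ψ (p (n + 1)) → ψ (p (n + 1)) = r * ψ (p n)) ∧
      (ψ (p (n + 1)) = r * ψ (p (n + 2)) → ψ (p n) = r * ψ (p (n + 1))) := by
    intro n
    have e1 := e n
    have e2 := e (n + 1)
    have s1 := hψ _ (hstep n).1
    have s2 := hψ _ (hstep n).2
    have t1 := hψ _ (hff n).1
    have t2 := hψ _ (hff n).2
    simp only [map_sub, map_smul, smul_eq_mul] at s1 s2 t1 t2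
    constructor
    · intro h
      rw [show n + 1 + 1 = n + 2 from rfl] at e2
      have : r * ψ (p (n + 1)) = r * (1 / 2 * (ψ (p n) + ψ (f (p n)))) := by rw [← e1]
      linarith
    · intro h
      rw [show n + 1 + 1 = n + 2 from rfl] at e2
      have : r * ψ (p (n + 2)) = r * (1 / 2 * (ψ (p (n + 1)) + ψ (f (p (n + 1))))) := by rw [← e2]
      linarith
  have hr0 : 0 < r := by linarith
  rcases ht with ht | ht
  · have back : ∀ k n, n + k = N → ψ (p (n + 1)) = r * ψ (p n) := by
      intro k
      induction k with
      | zero => rintro n rfl; exact ht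
      | succ k ih => intro n hn; exact (hkey n).1 (ih (n + 1) (by omega))
    have grow : ∀ n, n ≤ N → ψ (p n) = r ^ n * ψ (p 0) := by
      intro n
      induction n with
      | zero => simp
      | succ n ih =>
        intro hn
        rw [back (N - n) n (by omega), ih (by omega)]
        ring
    have h1 := grow N le_rfl
    have h2 := b1 N
    have h3 := mul_le_mul_of_nonneg_left (b2 0) hB.le
    have h4 := mul_lt_mul_of_pos_right hN (hpos 0)
    linarith
  · have back : ∀ k n, n + k = N → ψ (p n) = r * ψ (p (n + 1)) := by
      intro k
      induction k with
      | zero => rintro n rfl; exact ht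
      | succ k ih => intro n hn; exact (hkey n).2 (ih (n + 1) (by omega))
    have grow : ∀ n, n ≤ N → ψ (p 0) = r ^ n * ψ (p n) := by
      intro n
      induction n with
      | zero => simp
      | succ n ih =>
        intro hn
        rw [ih (by omega), back (N - n) n (by omega)]
        ring
    have h1 := grow N le_rfl
    have h2 := b1 0
    have h3 := mul_le_mul_of_nonneg_left (b2 N) hB.le
    have h4 := mul_lt_mul_of_pos_right hN (hpos N)
    linarith

/-- If a functional is constant on the averaged orbit of `w`, then `f` has a fixed point with that same
value of the functional, namely any accumulation point of the orbit. -/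
theorem exists_fixed_of_orbit [FiniteDimensional ℝ X] (hC : IsClosedCone C) {f : X → X}
    (hm : Set.MapsTo f (interior C) (interior C)) (hfc : ContinuousOn f (interior C))
    (hf : ThompsonNonexp C f) {x w : X} (hx : x ∈ interior C) (hfx : f x = x)
    (hw : w ∈ interior C) {ψ : X →L[ℝ] ℝ} {c : ℝ}
    (hψ : ∀ n, ψ ((fun z => (1 / 2 : ℝ) • (z + f z))^[n] w) = c) :
    ∃ p ∈ interior C, f p = p ∧ ψ p = c := by
  set g : X → X := fun z => (1 / 2 : ℝ) • (z + f z) with hg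
  have hgm : Set.MapsTo g (interior C) (interior C) := fun z hz =>
    interior_smul_pos hC (by norm_num) (interior_add hC hz (interior_subset (hm hz)))
  have hgc : ContinuousOn g (interior C) := (continuousOn_id.add hfc).const_smul _
  have hgn : ThompsonNonexp C g := thompsonNonexp_average hC hf
  have hgx : g x = x := by
    simp only [hg, hfx]
    module
  have hmi : ∀ n, Set.MapsTo (g^[n]) (interior C) (interior C) := fun n => hgm.iterate n
  have hci : ∀ n, ContinuousOn (g^[n]) (interior C) := fun n => hgc.iterate hgm n
  obtain ⟨B, hB1, hB, -⟩ := thompson_attained hC hx hw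
  have hB0 : 0 < B := by linarith
  have horb : ∀ n, ThompsonLE C B x (g^[n] w) := fun n => by
    have := thompsonNonexp_iterate hgm hgn n x hx w hw B hB1 hB
    rwa [Function.iterate_fixed hgx] at this
  choose ρ hρ1 hρ _ hρmin using fun n : ℕ =>
    thompson_attained hC (hmi n hw) (hmi (n + 1) hw)
  have hanti : Antitone ρ := by
    refine antitone_nat_of_succ_le fun n => hρmin (n + 1) _ (hρ1 n) ?_
    have := hgn _ (hmi n hw) _ (hmi (n + 1) hw) _ (hρ1 n) (hρ n)
    simpa only [← Function.iterate_succ_apply'] using this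
  have hbdd : BddBelow (Set.range ρ) := ⟨1, by rintro _ ⟨n, rfl⟩; exact hρ1 n⟩
  have hlim := tendsto_atTop_ciInf hanti hbdd
  set r := ⨅ n, ρ n
  have hr1 : 1 ≤ r := le_ciInf hρ1
  have hrle : ∀ n, r ≤ ρ n := fun n => ciInf_le hbdd n
  obtain ⟨p, ⟨-, hpB⟩, φ, hφ, hpl⟩ := (isCompact_thompsonBall hC x B).tendsto_subseq
    (x := fun n => g^[n] w) (fun n => ⟨interior_subset (hmi n hw), horb n⟩)
  have hp : p ∈ interior C := mem_interior_of_thompson hC hB0 hx hpB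
  have hiter : ∀ m, Tendsto (fun k => g^[m + φ k] w) atTop (𝓝 (g^[m] p)) := by
    intro m
    have := ((hci m).continuousAt (isOpen_interior.mem_nhds hp)).tendsto.comp hpl
    simpa only [Function.comp_def, ← Function.iterate_add_apply] using this
  have hρφ : ∀ m, Tendsto (fun k => ρ (m + φ k)) atTop (𝓝 r) := fun m =>
    hlim.comp (tendsto_atTop_mono (fun k => Nat.le_add_left _ _) hφ.tendsto_atTop)
  have hiter' : ∀ m, Tendsto (fun k => g^[m + φ k + 1] w) atTop (𝓝 (g^[m + 1] p)) := fun m => by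
    simpa only [Nat.add_right_comm] using hiter (m + 1)
  -- Along the orbit of `p` all steps have length exactly `log r`, the limit of the decreasing step
  -- lengths of the orbit of `w`.
  have key : g^[1] p = g^[0] p := by
    refine eq_of_constant_steps hC hf (p := fun n => g^[n] p) (fun n => hmi n hp)
      (fun n => by rw [Function.iterate_succ_apply']) hx hB0
      (r := r) (B := B) (fun n => ?_) hr1 (fun n => ?_) (fun n β hβ h => ?_)
    · have := thompsonNonexp_iterate hgm hgn n x hx p hp B hB1 hpB
      rwa [Function.iterate_fixed hgx] at this
    · constructor
      · exact hC.1.mem_of_tendsto (((hρφ n).smul (hiter n)).sub (hiter' n))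
          (Eventually.of_forall fun k => (hρ (n + φ k)).1)
      · exact hC.1.mem_of_tendsto (((hρφ n).smul (hiter' n)).sub (hiter n))
          (Eventually.of_forall fun k => (hρ (n + φ k)).2)
    -- A step shorter than `log r` would, being an open condition after enlarging `β` to `s`, also
    -- occur along the orbit of `w`.
    · refine le_of_forall_gt_imp_ge_of_dense fun s hs => ?_
      have aux : ∀ u ∈ interior C, ∀ v, β • u - v ∈ C → s • u - v ∈ interior C := by
        intro u hu v huv
        convert interior_add hC (interior_smul_pos hC (sub_pos.2 hs) hu) huv using 1
        module
      have i1 := aux _ (hmi n hp) _ h.1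
      have i2 := aux _ (hmi (n + 1) hp) _ h.2
      have l1 := ((hiter n).const_smul s).sub (hiter' n)
      have l2 := ((hiter' n).const_smul s).sub (hiter n)
      obtain ⟨k, k1, k2⟩ := ((l1.eventually (isOpen_interior.mem_nhds i1)).and
        (l2.eventually (isOpen_interior.mem_nhds i2))).exists
      exact (hrle _).trans (hρmin (n + φ k) s (hβ.trans hs.le)
        ⟨interior_subset k1, interior_subset k2⟩)
  refine ⟨p, hp, ?_, ?_⟩
  · have k2 : (1 / 2 : ℝ) • (p + f p) = p := key
    have k3 : (2 : ℝ) • ((1 / 2 : ℝ) • (p + f p)) - p = (2 : ℝ) • p - p := by rw [k2]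
    convert k3 using 1 <;> module
  · have l := (ψ.continuous.tendsto p).comp hpl
    have : (⇑ψ ∘ (fun n => g^[n] w) ∘ φ) = fun _ => c := funext fun k => hψ _
    rw [this] at l
    exact tendsto_nhds_unique l tendsto_const_nhds

theorem analyticOnNhd_iterate {g : X → X} (hm : Set.MapsTo g (interior C) (interior C))
    (hg : AnalyticOnNhd ℝ g (interior C)) (n : ℕ) : AnalyticOnNhd ℝ (g^[n]) (interior C) := by
  induction n with
  | zero => exact analyticOnNhd_id
  | succ k ih => exact ih.comp hg hm

/-- Two distinct fixed points produce fixed points at every level of a functional witnessing their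
distance. -/
theorem exists_fixed_of_tight [FiniteDimensional ℝ X] (hC : IsClosedCone C) {f : X → X}
    (hm : Set.MapsTo f (interior C) (interior C)) (han : AnalyticOnNhd ℝ f (interior C))
    (hf : ThompsonNonexp C f) {x y : X} (hx : x ∈ interior C)
    (hfx : f x = x) (hfy : f y = y) {r : ℝ} (hr : 1 < r) (h : ThompsonLE C r x y)
    {ψ : X →L[ℝ] ℝ} (hψ : ∀ z ∈ C, 0 ≤ ψ z) (ht : ψ y = r * ψ x) {u : ℝ} (hu : 0 < u) :
    ∃ p ∈ interior C, f p = p ∧ ψ p = u * ψ x := by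
  have hr0 : 0 < r := by linarith
  have hd : 0 < r ^ 2 - 1 := by nlinarith
  -- `a` and `b` are the solutions of `a + b = x`, `r • a + r⁻¹ • b = y`.
  obtain ⟨a, ha, b, hb, rfl, rfl⟩ :
      ∃ a ∈ C, ∃ b ∈ C, x = a + b ∧ y = r • a + r⁻¹ • b := by
    refine ⟨(r ^ 2 - 1)⁻¹ • (r • y - x), cone_smul hC (by positivity) h.2,
      (r / (r ^ 2 - 1)) • (r • x - y), cone_smul hC (by positivity) h.1, ?_, ?_⟩
    · match_scalars <;> field_simp <;> ring
    · match_scalars <;> field_simp <;> ring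
  set g : X → X := fun z => (1 / 2 : ℝ) • (z + f z) with hg
  have hgm : Set.MapsTo g (interior C) (interior C) := fun z hz =>
    interior_smul_pos hC (by norm_num) (interior_add hC hz (interior_subset (hm hz)))
  have hga : AnalyticOnNhd ℝ g (interior C) := fun z hz =>
    analyticAt_const.smul (analyticAt_id.add (han z hz))
  have hgn : ThompsonNonexp C g := thompsonNonexp_average hC hf
  have hfix : ∀ z, f z = z → g z = z := fun z hz => by
    simp only [hg, hz]
    module
  refine exists_fixed_of_orbit hC hm han.continuousOn hf hx hfx
    (curve_mem_interior hC ha hb hx hu) fun n => ?_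
  exact tight_along_curve hC (analyticOnNhd_iterate hgm hga n)
    (thompsonNonexp_iterate hgm hgn n) ha hb hx hr (Function.iterate_fixed (hfix _ hfx) n)
    (Function.iterate_fixed (hfix _ hfy) n) hψ ht hu

end Helpers

/-- A real analytic `d_T`-nonexpansive map `f : int C → int C` on a finite
dimensional closed cone has a unique fixed point iff `Fix(f)` is nonempty and `d_T`-bounded. -/
theorem stmt16 {X : Type*} [NormedAddCommGroup X] [NormedSpace ℝ X] [FiniteDimensional ℝ X]
    {C : Set X} (hC : IsClosedCone C) (hne : (interior C).Nonempty)
    {f : X → X} (hf : Set.MapsTo f (interior C) (interior C))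
    (han : AnalyticOnNhd ℝ f (interior C))
    (hfn : TNonexpansiveOn C f (interior C)) :
    (∃ x ∈ interior C, f x = x ∧ ∀ y ∈ interior C, f y = y → y = x) ↔
      (({x ∈ interior C | f x = x}).Nonempty ∧
        TBounded C {x ∈ interior C | f x = x}) := by
  constructor
  · rintro ⟨x, hx, hfx, huniq⟩
    refine ⟨⟨x, hx, hfx⟩, thompsonDist C x x, ?_⟩
    rintro y ⟨hy, hfy⟩ z ⟨hz, hfz⟩
    rw [huniq y hy hfy, huniq z hz hfz]
  · rintro ⟨⟨x, hx, hfx⟩, d, hd⟩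
    refine ⟨x, hx, hfx, fun y hy hfy => ?_⟩
    have hnon := thompsonNonexp_of hC hf hfn
    obtain ⟨r, hr1, hr, -, hmin⟩ := thompson_attained hC hx hy
    rcases hr1.eq_or_lt with rfl | hr1'
    · simp only [ThompsonLE, one_smul] at hr
      exact sub_eq_zero.1 (cone_antisymm hC hr.2 (by simpa using hr.1))
    exfalso
    have main : ∀ x' ∈ interior C, ∀ y', f x' = x' → f y' = y' → ThompsonLE C r x' y' →
        ∀ ψ : X →L[ℝ] ℝ, (∀ z ∈ C, 0 ≤ ψ z) → (∀ z ∈ interior C, 0 < ψ z) →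
        ψ y' = r * ψ x' → False := by
      intro x' hx' y' hfx' hfy' h ψ hψ hψi ht
      -- A fixed point within distance `d` of `x'` has `ψ`-value at most `exp d * ψ x'`.
      obtain ⟨p, hp, hfp, hψp⟩ := exists_fixed_of_tight hC hf han hnon hx' hfx' hfy' hr1' h hψ ht
        (u := Real.exp d + 1) (by positivity)
      obtain ⟨s, hs1, hs, hsd, -⟩ := thompson_attained hC hx' hp
      have h1 := hd x' ⟨hx', hfx'⟩ p ⟨hp, hfp⟩
      rw [hsd, Real.log_le_iff_le_exp (by linarith)] at h1
      have h2 := hψ _ hs.1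
      rw [map_sub, map_smul, smul_eq_mul, hψp] at h2
      have h3 := mul_le_mul_of_nonneg_right h1 (hψi x' hx').le
      linarith [hψi x' hx']
    obtain ⟨ψ, hψ, hψi, ht | ht⟩ := exists_tight hC hx hr1' hr hmin
    · exact main x hx y hfx hfy hr ψ hψ hψi ht
    · exact main y hy x hfy hfx hr.symm ψ hψ hψi ht
end
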